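/- Fix Ω₀ > 4/√π and set Ω(ε) = Ω₀/ε and R₀ = √(1 − 4/(√π Ω₀)). There exist a constant C = C(Ω₀) and ε₀ > 0 such that for all 0 < ε < ε₀ and every GP minimizer Ψ of E^GP_{ε,Ω(ε)}, the L⁴ mass of Ψ inside the Thomas–Fermi hole satisfies ∫_{{|x| < R₀}} |Ψ(x)|⁴ dx ≤ C ε|log ε|. -/

import Mathlib

open MeasureTheory Real Filter

noncomputable section

/-- Points of the plane. -/
abbrev Pt : Type := EuclideanSpace ℝ (Fin 2)

/-- The open unit disc. -/
def B1 : Set Pt := Metric.ball 0 1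

/-- First partial derivative of a complex-valued function. -/
def pd1 (Ψ : Pt → ℂ) (x : Pt) : ℂ := fderiv ℝ Ψ x (EuclideanSpace.single 0 1)

/-- Second partial derivative of a complex-valued function. -/
def pd2 (Ψ : Pt → ℂ) (x : Pt) : ℂ := fderiv ℝ Ψ x (EuclideanSpace.single 1 1)

/-- Angular momentum operator `L = -i (x₁ ∂₂ - x₂ ∂₁)`. -/
def angMom (Ψ : Pt → ℂ) (x : Pt) : ℂ :=
  -Complex.I * ((x 0 : ℂ) * pd2 Ψ x - (x 1 : ℂ) * pd1 Ψ x)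

/-- The Gross-Pitaevskii energy density `|∇Ψ|² - Ω conj(Ψ) LΨ + |Ψ|⁴/ε²`. -/
def gpDensity (ε Ω : ℝ) (Ψ : Pt → ℂ) (x : Pt) : ℝ :=
  ‖pd1 Ψ x‖ ^ 2 + ‖pd2 Ψ x‖ ^ 2
    - Ω * (starRingEnd ℂ (Ψ x) * angMom Ψ x).re
    + ‖Ψ x‖ ^ 4 / ε ^ 2

/-- The Gross-Pitaevskii functional on the unit disc. -/
def gpEnergy (ε Ω : ℝ) (Ψ : Pt → ℂ) : ℝ := ∫ x in B1, gpDensity ε Ω Ψ x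

/-- Admissible (H¹, normalized) wave functions. -/
def gpAdm (Ψ : Pt → ℂ) : Prop :=
  DifferentiableOn ℝ Ψ B1 ∧
  IntegrableOn (fun x => ‖Ψ x‖ ^ 2) B1 ∧
  IntegrableOn (fun x => ‖pd1 Ψ x‖ ^ 2 + ‖pd2 Ψ x‖ ^ 2) B1 ∧
  IntegrableOn (fun x => ‖Ψ x‖ ^ 4) B1 ∧
  IntegrableOn (fun x => (starRingEnd ℂ (Ψ x) * angMom Ψ x).re) B1 ∧
  (∫ x in B1, ‖Ψ x‖ ^ 2) = 1

/-- The GP ground-state energy: infimum of the functional over normalized functions. -/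
def gpGround (ε Ω : ℝ) : ℝ := sInf {E | ∃ Ψ : Pt → ℂ, gpAdm Ψ ∧ E = gpEnergy ε Ω Ψ}

/-- A GP minimizer: a normalized admissible function attaining the infimum. -/
def IsGPMinimizer (ε Ω : ℝ) (Ψ : Pt → ℂ) : Prop :=
  gpAdm Ψ ∧ gpEnergy ε Ω Ψ = gpGround ε Ω

/-- The Thomas-Fermi functional. -/
def tfEnergy (Ω₀ : ℝ) (ρ : Pt → ℝ) : ℝ :=
  ∫ x in B1, ((ρ x) ^ 2 - Ω₀ ^ 2 * ‖x‖ ^ 2 * ρ x / 4)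

/-- Admissible TF densities: nonnegative, in L²(B₁), of total mass one. -/
def tfAdm (ρ : Pt → ℝ) : Prop :=
  IntegrableOn ρ B1 ∧ IntegrableOn (fun x => (ρ x) ^ 2) B1 ∧
  (∀ᵐ x ∂(volume.restrict B1), 0 ≤ ρ x) ∧ (∫ x in B1, ρ x) = 1

/-- The TF ground-state energy. -/
def tfGround (Ω₀ : ℝ) : ℝ := sInf {E | ∃ ρ : Pt → ℝ, tfAdm ρ ∧ E = tfEnergy Ω₀ ρ}

/-- Radius of the TF "hole". -/
def R0 (Ω₀ : ℝ) : ℝ := Real.sqrt (1 - 4 / (Real.sqrt π * Ω₀))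

/-- The TF minimizer. -/
def rhoTF (Ω₀ : ℝ) (x : Pt) : ℝ :=
  if Ω₀ ≤ 4 / Real.sqrt π then 1 / π - Ω₀ ^ 2 / 16 * (1 - 2 * ‖x‖ ^ 2)
  else max 0 (Ω₀ ^ 2 / 8 * (‖x‖ ^ 2 - 1) + Ω₀ / (2 * Real.sqrt π))


lemma per_bound (G : ℝ → ℝ) (hc : Continuous G) (hp : Function.Periodic G (2*π))
    (h0 : ∀ x, 0 ≤ G x) (b : ℝ) (hb : 1 ≤ b) :
    ∫ x in (-1:ℝ)..1, G (b * x) ≤ 2 * ∫ x in (0:ℝ)..(2*π), G x := by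
  have hb0 : 0 < b := by linarith
  rw [intervalIntegral.integral_comp_mul_left _ hb0.ne']
  set P := ∫ x in (0:ℝ)..(2*π), G x with hP
  have hPi := Real.pi_gt_three
  have hP0 : 0 ≤ P := intervalIntegral.integral_nonneg (by positivity) (fun x _ => h0 x)
  set M := ⌈b / π⌉₊ with hM
  have h1 : (b/π) ≤ M := Nat.le_ceil _
  have h2 : (M:ℝ) < b/π + 1 := Nat.ceil_lt_add_one (by positivity)
  have h3 : ∫ x in (b * -1)..(b * 1), G x ≤ ∫ x in (b * -1)..(b * -1 + (M:ℤ) • (2*π)), G x := by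
    have : b * 1 ≤ b * -1 + (M:ℤ) • (2*π) := by
      have := (div_le_iff₀ Real.pi_pos).1 h1
      simp; nlinarith
    refine intervalIntegral.integral_mono_interval le_rfl (by linarith) this ?_ (hc.intervalIntegrable _ _)
    exact Eventually.of_forall (fun x => h0 x)
  rw [hp.intervalIntegral_add_zsmul_eq _ _ (fun _ _ => hc.intervalIntegrable _ _)] at h3
  have h4 : b⁻¹ * M ≤ 2 := by
    rw [inv_mul_le_iff₀ hb0]
    have : b/π ≤ b := div_le_self hb0.le (by linarith)
    linarith
  calc b⁻¹ • ∫ x in (b * -1)..(b * 1), G x ≤ b⁻¹ * (M * P) := by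
        rw [smul_eq_mul]
        gcongr
        rw [hp.intervalIntegral_add_eq (b * -1) 0] at h3
        simpa using h3
    _ = (b⁻¹ * M) * P := by ring
    _ ≤ _ := by gcongr

lemma cos_shift_bound (u : ℝ) (hu : |u| ≤ π) : u^2/9 ≤ 1 - cos u := by
  have := Real.cos_le_one_sub_mul_cos_sq hu
  have h2 : (1:ℝ)/9 ≤ 2/π^2 := by
    rw [div_le_div_iff₀ (by norm_num) (by positivity)]
    nlinarith [Real.pi_lt_d2, Real.pi_pos]
  nlinarith [sq_nonneg u]

lemma shift_int (g : ℝ → ℝ) :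
    ∫ x in (0:ℝ)..(2*π), g (cos x) = ∫ u in (-π)..π, g (-cos u) := by
  have := intervalIntegral.integral_comp_add_right (a := -π) (b := π) (fun x => g (cos x)) π
  simp only [Real.cos_add_pi] at this
  rw [this]; congr 1 <;> ring

lemma inner_bound (A : ℝ) (hA : 0 < A) :
    ∫ x in (0:ℝ)..(2*π), 1/(A + (1 + cos x)) ≤ 3*π/√A := by
  rw [shift_int (fun c => 1/(A + (1 + c)))]
  have hs : 0 < √A := Real.sqrt_pos.2 hA
  have hss : √A^2 = A := Real.sq_sqrt hA.le
  have hd : ∀ u ∈ Set.uIcc (-π) π, HasDerivAt (fun u => 3/√A * arctan (u/(3*√A))) (1/(A+u^2/9)) u := by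
    intro u _
    have := ((hasDerivAt_id u).div_const (3*√A)).arctan.const_mul (3/√A)
    refine HasDerivAt.congr_deriv this ?_
    have : 0 < A + u^2/9 := by positivity
    try simp only [id]
    have e : 1 + (u/(3*√A))^2 = (A + u^2/9)/A := by
      rw [div_pow, mul_pow, hss]; field_simp; ring
    rw [e]
    have e2 : A = √A * √A := by nlinarith
    field_simp
    nlinarith
  have hc : Continuous (fun u:ℝ => 1/(A+u^2/9)) := by
    refine continuous_const.div (by fun_prop) (fun u => ?_)
    positivity
  have h1 : ∫ u in (-π)..π, 1/(A + (1 + -cos u)) ≤ ∫ u in (-π)..π, 1/(A+u^2/9) := by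
    refine intervalIntegral.integral_mono_on (by linarith [Real.pi_pos]) ?_ (hc.intervalIntegrable _ _) ?_
    · refine Continuous.intervalIntegrable ?_ _ _
      refine continuous_const.div (by fun_prop) (fun u => ?_)
      have := cos_le_one u
      nlinarith
    · intro u hu
      have := cos_shift_bound u (abs_le.2 ⟨by linarith [hu.1], hu.2⟩)
      refine one_div_le_one_div_of_le (by positivity) (by linarith)
  rw [intervalIntegral.integral_eq_sub_of_hasDerivAt hd (hc.intervalIntegrable _ _)] at h1
  refine h1.trans ?_
  have a1 := arctan_lt_pi_div_two (π/(3*√A))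
  have a2 := neg_pi_div_two_lt_arctan (-π/(3*√A))
  rw [← mul_sub]
  calc _ ≤ 3/√A * π := by gcongr; linarith
    _ = _ := by ring

lemma arsinh_bound (δ : ℝ) (h0 : 0 < δ) (h1 : δ ≤ 1) : arsinh (π/(3*δ)) ≤ log (4/δ) := by
  unfold arsinh
  have hx : π/(3*δ) ≤ 1.05/δ := by
    rw [div_le_div_iff₀ (by positivity) h0]; nlinarith [Real.pi_lt_d2]
  have hx0 : 0 < π/(3*δ) := by positivity
  apply Real.log_le_log (by positivity)
  have : √(1+(π/(3*δ))^2) ≤ 1/δ + 1.05/δ := by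
    rw [Real.sqrt_le_left (by positivity)]
    have h2 : 1 ≤ 1/δ := by rw [le_div_iff₀ h0]; linarith
    have : (1.05/δ) = 1.05 * (1/δ) := by ring
    nlinarith
  calc _ ≤ 1.05/δ + (1/δ+1.05/δ) := by gcongr
    _ = 3.1/δ := by ring
    _ ≤ 4/δ := by gcongr; norm_num

lemma outer_bound (δ : ℝ) (h0 : 0 < δ) (h1 : δ ≤ 1) :
    ∫ x in (0:ℝ)..(2*π), 1/√(δ^2 + (1 + cos x)) ≤ 6 * log (4/δ) := by
  rw [shift_int (fun c => 1/√(δ^2 + (1 + c)))]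
  have hd : ∀ u ∈ Set.uIcc (-π) π, HasDerivAt (fun u => 3 * arsinh (u/(3*δ))) (1/√(δ^2+u^2/9)) u := by
    intro u _
    have := ((hasDerivAt_id u).div_const (3*δ)).arsinh.const_mul 3
    refine HasDerivAt.congr_deriv this ?_
    try simp only [id]
    have : δ^2 + u^2/9 = δ^2 * (1 + (u/(3*δ))^2) := by field_simp; ring
    rw [this, Real.sqrt_mul (by positivity), Real.sqrt_sq h0.le]
    simp
    field_simp
  have hc : Continuous (fun u:ℝ => 1/√(δ^2+u^2/9)) := by
    refine continuous_const.div (by fun_prop) (fun u => ?_)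
    positivity
  have h1' : ∫ u in (-π)..π, 1/√(δ^2 + (1 + -cos u)) ≤ ∫ u in (-π)..π, 1/√(δ^2+u^2/9) := by
    refine intervalIntegral.integral_mono_on (by linarith [Real.pi_pos]) ?_ (hc.intervalIntegrable _ _) ?_
    · refine Continuous.intervalIntegrable ?_ _ _
      refine continuous_const.div (by fun_prop) (fun u => ?_)
      have := cos_le_one u
      refine (Real.sqrt_pos.2 ?_).ne'
      have : 0 < δ^2 := by positivity
      linarith
    · intro u hu
      have := cos_shift_bound u (abs_le.2 ⟨by linarith [hu.1], hu.2⟩)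
      refine one_div_le_one_div_of_le (by positivity) (Real.sqrt_le_sqrt (by linarith))
  rw [intervalIntegral.integral_eq_sub_of_hasDerivAt hd (hc.intervalIntegrable _ _)] at h1'
  refine h1'.trans ?_
  have := arsinh_bound δ h0 h1
  rw [neg_div, arsinh_neg]
  linarith

/-- the core integral, a periodic log-singularity -/
def kern (δ b q X Y : ℝ) : ℝ := 1/(δ^2 + (1 + cos (b*X)) + (1 + cos (q*Y)))

lemma kern_den_pos (δ : ℝ) (h0 : 0 < δ) (s t : ℝ) : 0 < δ^2 + (1 + cos s) + (1 + cos t) := by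
  have := neg_one_le_cos s
  have := neg_one_le_cos t
  have : 0 < δ^2 := by positivity
  linarith

lemma kern_cont (δ b q : ℝ) (h0 : 0 < δ) : Continuous (fun p : ℝ × ℝ => kern δ b q p.1 p.2) := by
  unfold kern
  exact continuous_const.div (by fun_prop) (fun p => (kern_den_pos δ h0 _ _).ne')

lemma kern_int (δ b q : ℝ) (h0 : 0 < δ) (h1 : δ ≤ 1) (hb : 1 ≤ b) (hq : 1 ≤ q) :
    ∫ X in (-1:ℝ)..1, ∫ Y in (-1:ℝ)..1, kern δ b q X Y ≤ 72*π * log (4/δ) := by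
  have hA : ∀ s, 0 < δ^2 + (1 + cos s) := fun s => by
    have := neg_one_le_cos s
    have : 0 < δ^2 := by positivity
    linarith
  have hc2 : Continuous (fun s => 1/√(δ^2 + (1 + cos s))) :=
    continuous_const.div (by fun_prop) (fun s => (Real.sqrt_pos.2 (hA s)).ne')
  have e1 : ∀ X, ∫ Y in (-1:ℝ)..1, kern δ b q X Y ≤ 6*π * (1/√(δ^2 + (1 + cos (b*X)))) := by
    intro X
    have := per_bound (fun t => 1/((δ^2 + (1 + cos (b*X))) + (1 + cos t)))
      (continuous_const.div (by fun_prop) (fun t => (kern_den_pos δ h0 _ t).ne'))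
      (by intro t; simp) (fun t => (one_div_pos.2 (kern_den_pos δ h0 _ t)).le) q hq
    refine this.trans ?_
    have := inner_bound _ (hA (b*X))
    calc _ ≤ 2 * (3*π/√(δ^2 + (1 + cos (b*X)))) := by gcongr
      _ = _ := by ring
  calc _ ≤ ∫ X in (-1:ℝ)..1, 6*π * (1/√(δ^2 + (1 + cos (b*X)))) := by
        refine intervalIntegral.integral_mono_on (by norm_num) ?_ ?_ (fun X _ => e1 X)
        · refine Continuous.intervalIntegrable ?_ _ _
          exact intervalIntegral.continuous_parametric_intervalIntegral_of_continuous' (f := kern δ b q) (by simpa [Function.uncurry_def] using kern_cont δ b q h0) _ _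
        · refine Continuous.intervalIntegrable ?_ _ _
          exact continuous_const.mul (hc2.comp (by fun_prop : Continuous (fun X => b * X)))
    _ ≤ _ := by
      rw [intervalIntegral.integral_const_mul]
      have := per_bound (fun s => 1/√(δ^2 + (1 + cos s))) hc2 (by intro t; simp) (fun t => by positivity) b hb
      have h3 := outer_bound δ h0 h1
      have : ∫ X in (-1:ℝ)..1, 1/√(δ^2 + (1 + cos (b*X))) ≤ 12 * log (4/δ) := by linarith
      calc _ ≤ 6*π*(12 * log (4/δ)) := by gcongr
        _ = _ := by ring

lemma posSq_deriv (x : ℝ) : HasDerivAt (fun x : ℝ => (max 0 x)^2) (2 * max 0 x) x := by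
  rcases lt_trichotomy x 0 with hx | hx | hx
  · have : (fun x : ℝ => (max 0 x)^2) =ᶠ[nhds x] fun _ => 0 := by
      filter_upwards [gt_mem_nhds hx] with y hy
      simp [max_eq_left hy.le]
    rw [max_eq_left hx.le]
    simpa using (hasDerivAt_const x (0:ℝ)).congr_of_eventuallyEq this
  · subst hx
    rw [hasDerivAt_iff_isLittleO]
    simp only [max_self, sub_zero, mul_zero, smul_zero]
    have : (fun x' : ℝ => (max 0 x')^2 - 0^2) =O[nhds 0] fun x' => x'^2 := by
      refine Asymptotics.IsBigO.of_bound 1 (Eventually.of_forall fun x => ?_)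
      rcases le_total 0 x with h | h
      · simp [max_eq_right h]
      · simp [max_eq_left h, sq_nonneg]
    have h2 : (fun x : ℝ => x^2) =o[nhds 0] fun x => x := by
      simpa using Asymptotics.isLittleO_pow_pow (𝕜 := ℝ) (m := 1) (n := 2) (by norm_num)
    simpa using this.trans_isLittleO h2
  · have : (fun x : ℝ => (max 0 x)^2) =ᶠ[nhds x] fun x => x^2 := by
      filter_upwards [lt_mem_nhds hx] with y hy
      simp [max_eq_right hy.le]
    rw [max_eq_right hx.le]
    simpa using (hasDerivAt_pow 2 x).congr_of_eventuallyEq this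

def bump (s : ℝ) : ℝ := (max 0 (1 - s^2))^2
def bump' (s : ℝ) : ℝ := -4 * s * max 0 (1 - s^2)

lemma bump_deriv (s : ℝ) : HasDerivAt bump (bump' s) s := by
  have h1 : HasDerivAt (fun s : ℝ => 1 - s^2) (-(2*s)) s := by
    simpa using (hasDerivAt_pow 2 s).const_sub 1
  refine ((posSq_deriv (1 - s^2)).comp s h1).congr_deriv ?_
  unfold bump'; ring

lemma bump_contDiff : ContDiff ℝ 1 bump := by
  rw [contDiff_one_iff_deriv]
  refine ⟨fun s => (bump_deriv s).differentiableAt, ?_⟩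
  rw [show deriv bump = bump' from funext fun s => (bump_deriv s).deriv]
  unfold bump'; fun_prop

lemma bump_supp (s : ℝ) (h : 1 ≤ |s|) : max 0 (1 - s^2) = 0 := by
  rw [max_eq_left]
  have : 1 ≤ |s|^2 := by nlinarith
  rw [sq_abs] at this; linarith

/-- vortex row function -/
def W (N : ℕ) (a q X Y : ℝ) : ℂ :=
  ∑ j ∈ Finset.Icc (-N:ℤ) N, ((bump (a*X - j) : ℝ) : ℂ) * Complex.exp (((q*j*Y : ℝ):ℂ) * Complex.I)

def Wx (N : ℕ) (a q X Y : ℝ) : ℂ :=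
  ∑ j ∈ Finset.Icc (-N:ℤ) N, ((bump' (a*X - j) * a : ℝ) : ℂ) * Complex.exp (((q*j*Y : ℝ):ℂ) * Complex.I)

def Wy (N : ℕ) (a q X Y : ℝ) : ℂ :=
  ∑ j ∈ Finset.Icc (-N:ℤ) N, ((bump (a*X - j) : ℝ) : ℂ) * (Complex.exp (((q*j*Y : ℝ):ℂ) * Complex.I) * (((q*j:ℝ):ℂ) * Complex.I))

lemma W_dx (N : ℕ) (a q X Y : ℝ) : HasDerivAt (fun X => W N a q X Y) (Wx N a q X Y) X := by
  unfold W Wx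
  refine HasDerivAt.fun_sum fun j _ => ?_
  refine HasDerivAt.mul_const ?_ _
  refine HasDerivAt.ofReal_comp ?_
  refine HasDerivAt.comp (h₂ := bump) (h := fun X => a*X - (j:ℝ)) X (bump_deriv _) ?_
  simpa using ((hasDerivAt_id X).const_mul a).sub_const (j:ℝ)

lemma W_dy (N : ℕ) (a q X Y : ℝ) : HasDerivAt (fun Y => W N a q X Y) (Wy N a q X Y) Y := by
  unfold W Wy
  refine HasDerivAt.fun_sum fun j _ => ?_
  refine HasDerivAt.const_mul _ ?_
  refine HasDerivAt.cexp ?_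
  refine HasDerivAt.mul_const ?_ _
  refine HasDerivAt.ofReal_comp ?_
  simpa using ((hasDerivAt_id Y).const_mul (q*j))

lemma W_contDiff (N : ℕ) (a q : ℝ) : ContDiff ℝ 1 (fun p : ℝ × ℝ => W N a q p.1 p.2) := by
  unfold W
  refine ContDiff.sum fun j _ => ?_
  refine ContDiff.mul ?_ ?_
  · refine Complex.ofRealCLM.contDiff.comp ?_
    refine bump_contDiff.comp ?_
    fun_prop
  · refine ContDiff.cexp ?_
    refine ContDiff.mul ?_ contDiff_const
    refine Complex.ofRealCLM.contDiff.comp (f := fun x : ℝ × ℝ => q * j * x.2) ?_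
    fun_prop

lemma sum_two (N : ℕ) (y : ℝ) (hy : |y| + 1 ≤ N) (F : ℤ → ℂ)
    (hF : ∀ j : ℤ, 1 ≤ |y - j| → F j = 0) :
    ∑ j ∈ Finset.Icc (-N:ℤ) N, F j = F ⌊y⌋ + F (⌊y⌋ + 1) := by
  have h1 := Int.floor_le y
  have h2 := Int.lt_floor_add_one y
  obtain ⟨h3, h4⟩ := abs_le.1 (show |y| ≤ N - 1 by linarith)
  have h5 : -(N:ℤ) ≤ ⌊y⌋ := by rw [Int.le_floor]; push_cast; linarith
  have h6 : ⌊y⌋ + 1 ≤ (N:ℤ) := by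
    have : (⌊y⌋:ℝ) + 1 ≤ N := by linarith
    exact_mod_cast this
  rw [← Finset.sum_pair (f := F) (by simp : ⌊y⌋ ≠ ⌊y⌋+1)]
  symm
  refine Finset.sum_subset ?_ ?_
  · intro j hj
    simp only [Finset.mem_insert, Finset.mem_singleton] at hj
    rw [Finset.mem_Icc]; omega
  · intro j _ hj
    simp only [Finset.mem_insert, Finset.mem_singleton, not_or] at hj
    apply hF
    rcases (show j ≤ ⌊y⌋ - 1 ∨ ⌊y⌋ + 2 ≤ j by omega) with h | h
    · have : (j:ℝ) ≤ ⌊y⌋ - 1 := by exact_mod_cast h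
      rw [le_abs]; left; linarith
    · have : (⌊y⌋:ℝ) + 2 ≤ j := by exact_mod_cast h
      rw [le_abs]; right; linarith

lemma sum_two_bound (N : ℕ) (y : ℝ) (hy : |y| + 1 ≤ N) (F : ℤ → ℂ) (B : ℝ)
    (hF : ∀ j : ℤ, 1 ≤ |y - j| → F j = 0) (hB : ∀ j, ‖F j‖ ≤ B) :
    ‖∑ j ∈ Finset.Icc (-N:ℤ) N, F j‖ ≤ 2 * B := by
  rw [sum_two N y hy F hF]
  linarith [norm_add_le (F ⌊y⌋) (F (⌊y⌋+1)), hB ⌊y⌋, hB (⌊y⌋+1)]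

lemma max_le_aux (s : ℝ) : 0 ≤ max 0 (1-s^2) ∧ max 0 (1-s^2) ≤ 1 ∧ |s| * max 0 (1 - s^2) ≤ 1 := by
  refine ⟨le_max_left _ _, max_le zero_le_one (by nlinarith), ?_⟩
  rcases le_total 1 |s| with h | h
  · rw [bump_supp s h]; simp
  · have : max 0 (1-s^2) ≤ 1 := max_le zero_le_one (by nlinarith)
    nlinarith [abs_nonneg s, le_max_left 0 (1-s^2)]

lemma Wx_bound (N : ℕ) (a q X Y : ℝ) (ha : 0 ≤ a) (h : |a*X| + 1 ≤ N) :
    ‖Wx N a q X Y‖ ≤ 8 * a := by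
  unfold Wx
  refine (sum_two_bound N (a*X) h _ (4*a) ?_ ?_).trans (by linarith)
  · intro j hj
    simp [bump', bump_supp _ hj]
  · intro j
    rw [norm_mul, Complex.norm_exp_ofReal_mul_I, mul_one, Complex.norm_real, norm_mul,
      Real.norm_eq_abs, Real.norm_eq_abs, abs_of_nonneg ha]
    obtain ⟨h1, h2, h3⟩ := max_le_aux (a*X - j)
    gcongr
    unfold bump'
    rw [abs_mul, abs_mul, abs_of_nonneg h1]
    norm_num
    linarith

lemma DWy_bound (N : ℕ) (a q X Y : ℝ) (hq : 0 ≤ q) (h : |a*X| + 1 ≤ N) :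
    ‖Wy N a q X Y - ((q*(a*X):ℝ):ℂ) * Complex.I * W N a q X Y‖ ≤ 2 * q := by
  unfold Wy W
  rw [Finset.mul_sum, ← Finset.sum_sub_distrib]
  refine (sum_two_bound N (a*X) h _ q ?_ ?_)
  · intro j hj
    simp [bump, bump_supp _ hj]
  · intro j
    have : ((bump (a*X - j) : ℝ) : ℂ) * (Complex.exp (((q*j*Y : ℝ):ℂ) * Complex.I) * (((q*j:ℝ):ℂ) * Complex.I))
      - ((q*(a*X):ℝ):ℂ) * Complex.I * (((bump (a*X - j) : ℝ) : ℂ) * Complex.exp (((q*j*Y : ℝ):ℂ) * Complex.I))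
      = ((-(q * ((a*X - j) * bump (a*X-j))) : ℝ) : ℂ) * Complex.I * Complex.exp (((q*j*Y : ℝ):ℂ) * Complex.I) := by
      push_cast; ring
    rw [this, norm_mul, Complex.norm_exp_ofReal_mul_I, mul_one, norm_mul, Complex.norm_I, mul_one,
      Complex.norm_real, norm_neg, norm_mul, Real.norm_eq_abs, Real.norm_eq_abs, abs_of_nonneg hq]
    obtain ⟨h1, h2, h3⟩ := max_le_aux (a*X - j)
    have : |(a*X - j) * bump (a*X-j)| ≤ 1 := by
      unfold bump
      rw [abs_mul, abs_of_nonneg (a := (max 0 (1 - (a*X-j)^2))^2) (sq_nonneg _)]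
      calc _ = (|a*X-j| * max 0 (1 - (a*X-j)^2)) * max 0 (1 - (a*X-j)^2) := by ring
        _ ≤ 1 * 1 := by gcongr
        _ = 1 := by ring
    nlinarith

lemma W_poly (p c : ℝ) (p0 : 0 ≤ p) (p1 : p ≤ 1/4) (c0 : 0 ≤ c) (c2 : c ≤ 2) :
    (5*(1-4*p) + c)/100 ≤ (1-4*p)*(1+2*p)^2 + 2*(p*(2+p))^2*c := by
  have g1 : (1-4*p) ≤ (1-4*p)*(1+2*p)^2 := le_mul_of_one_le_right (by linarith) (by nlinarith)
  have g2 : 4*p^2 ≤ (p*(2+p))^2 := by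
    have : 2*p ≤ p*(2+p) := by nlinarith
    nlinarith
  have g3 : 2*(4*p^2)*c ≤ 2*(p*(2+p))^2*c := by gcongr
  have g4 : (5*(1-4*p) + c)/100 ≤ (1-4*p) + 2*(4*p^2)*c := by
    rcases le_total p (1/8) with h | h
    · have := mul_nonneg (sq_nonneg p) c0
      linarith
    · have : (1/64) ≤ p^2 := by nlinarith
      have : (1/64)*c ≤ p^2*c := by gcongr
      linarith
  linarith

lemma W_lower (N : ℕ) (a q X Y : ℝ) (h : |a*X| + 1 ≤ N) :
    ((1 + cos (2*π*a*X)) + (1 + cos (q*Y)))/100 ≤ ‖W N a q X Y‖^2 := by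
  unfold W
  rw [sum_two N (a*X) h _ (by intro j hj; simp [bump, bump_supp _ hj])]
  set k := ⌊a*X⌋ with hk
  set s := a*X - k with hs
  have hs0 : 0 ≤ s := by rw [hs]; linarith [Int.floor_le (a*X)]
  have hs1 : s ≤ 1 := by rw [hs]; linarith [Int.lt_floor_add_one (a*X)]
  have e1 : bump s = (1-s^2)^2 := by
    unfold bump; rw [max_eq_right]; nlinarith
  have e2 : bump (a*X - ((k+1:ℤ):ℝ)) = (s*(2-s))^2 := by
    have : a*X - ((k+1:ℤ):ℝ) = s - 1 := by rw [hs]; push_cast; ring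
    rw [this]
    unfold bump; rw [max_eq_right]
    · ring
    · nlinarith
  rw [e1, e2]
  have e3 : (((1-s^2)^2:ℝ):ℂ) * Complex.exp (((q*k*Y : ℝ):ℂ) * Complex.I)
    + (((s*(2-s))^2:ℝ):ℂ) * Complex.exp (((q*(k+1:ℤ)*Y : ℝ):ℂ) * Complex.I)
    = Complex.exp (((q*k*Y : ℝ):ℂ) * Complex.I) * ((((1-s^2)^2:ℝ):ℂ) + (((s*(2-s))^2:ℝ):ℂ) * Complex.exp (((q*Y : ℝ):ℂ) * Complex.I)) := by
    have : (((q*(k+1:ℤ)*Y : ℝ):ℂ) * Complex.I) = (((q*k*Y : ℝ):ℂ) * Complex.I) + (((q*Y : ℝ):ℂ) * Complex.I) := by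
      push_cast; ring
    rw [this, Complex.exp_add]; ring
  rw [e3, norm_mul, Complex.norm_exp_ofReal_mul_I, one_mul]
  have e4 : ‖(((1-s^2)^2:ℝ):ℂ) + (((s*(2-s))^2:ℝ):ℂ) * Complex.exp (((q*Y : ℝ):ℂ) * Complex.I)‖^2
      = ((1-s^2)^2 - (s*(2-s))^2)^2 + 2*((1-s^2)^2*(s*(2-s))^2)*(1 + cos (q*Y)) := by
    rw [← Complex.normSq_eq_norm_sq, Complex.normSq_apply, Complex.exp_mul_I, ← Complex.ofReal_cos, ← Complex.ofReal_sin]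
    simp only [Complex.add_re, Complex.add_im, Complex.ofReal_re, Complex.ofReal_im, Complex.mul_re, Complex.mul_im, Complex.I_re, Complex.I_im]
    have := sin_sq_add_cos_sq (q*Y)
    ring_nf
    ring_nf at this
    have h' : sin (q*Y)^2 = 1 - cos (q*Y)^2 := by linarith
    rw [h']; ring
  rw [e4]
  have hcos : 1 + cos (2*π*a*X) ≤ 5 * (1-2*s)^2 := by
    have e5 : 2*π*a*X = 2*(π*s) + k*(2*π) := by rw [hs]; ring
    rw [e5, Real.cos_add_int_mul_two_pi, Real.cos_two_mul]
    have e6 : cos (π*s) = sin (π*(1/2 - s)) := by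
      rw [← Real.cos_pi_div_two_sub]; congr 1; ring
    have e7 : |sin (π*(1/2-s))| ≤ |π*(1/2-s)| := Real.abs_sin_le_abs
    have e8 := sq_le_sq.2 e7
    rw [e6]
    have : π^2 ≤ 10 := by nlinarith [Real.pi_lt_d2, Real.pi_pos]
    nlinarith [sq_nonneg (1-2*s)]
  have c1 := neg_one_le_cos (q*Y)
  have c2 := cos_le_one (q*Y)
  set c := 1 + cos (q*Y)
  have hp : (1-2*s)^2 = 1 - 4*(s*(1-s)) := by ring
  have e9 : ((1-s^2)^2 - (s*(2-s))^2)^2 = (1 - 4*(s*(1-s)))*(1+2*(s*(1-s)))^2 := by ring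
  have e10 : (1-s^2)^2*(s*(2-s))^2 = ((s*(1-s))*(2+s*(1-s)))^2 := by ring
  rw [e9, e10]
  rw [hp] at hcos
  have p0 : 0 ≤ s*(1-s) := mul_nonneg hs0 (by linarith)
  have p1 : s*(1-s) ≤ 1/4 := by linarith [sq_nonneg (1-2*s)]
  have := W_poly (s*(1-s)) c p0 p1 (by show 0 ≤ 1 + cos (q*Y); linarith) (by show 1 + cos (q*Y) ≤ 2; linarith)
  linarith

def prof (η t : ℝ) : ℝ := √((t + √(t^2+η^2))/2)

lemma prof_r (η t : ℝ) (hη : 0 < η) : η ≤ √(t^2+η^2) ∧ |t| < √(t^2+η^2) ∧ √(t^2+η^2) ≤ |t| + η := by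
  refine ⟨Real.le_sqrt_of_sq_le (by nlinarith [sq_nonneg t]), ?_, ?_⟩
  · rw [← Real.sqrt_sq_eq_abs]
    exact Real.sqrt_lt_sqrt (sq_nonneg _) (by nlinarith)
  · rw [Real.sqrt_le_left (by positivity)]
    nlinarith [sq_abs t, abs_nonneg t]

lemma prof_pos (η t : ℝ) (hη : 0 < η) : 0 < (t + √(t^2+η^2))/2 := by
  obtain ⟨_, h, _⟩ := prof_r η t hη
  linarith [neg_abs_le t]

lemma prof_sq (η t : ℝ) (hη : 0 < η) : prof η t ^ 2 = (t + √(t^2+η^2))/2 := 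
  Real.sq_sqrt (prof_pos η t hη).le

lemma prof_close (η t : ℝ) (hη : 0 < η) : |prof η t ^ 2 - max 0 t| ≤ η/2 := by
  obtain ⟨h1, h2, h3⟩ := prof_r η t hη
  rw [prof_sq _ _ hη]
  rcases le_total 0 t with h | h
  · rw [max_eq_right h]
    rw [abs_of_nonneg h] at h2 h3
    rw [abs_le]; constructor <;> linarith
  · rw [max_eq_left h]
    rw [abs_of_nonpos h] at h2 h3
    rw [abs_le]; constructor <;> linarith

def prof' (η t : ℝ) : ℝ := prof η t / (2 * √(t^2+η^2))

lemma prof_deriv (η t : ℝ) (hη : 0 < η) : HasDerivAt (prof η) (prof' η t) t := by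
  have hr : 0 < t^2+η^2 := by positivity
  have h1 : HasDerivAt (fun t : ℝ => t^2+η^2) (2*t) t := by
    simpa using (hasDerivAt_pow 2 t).add_const (η^2)
  have h2 := (((hasDerivAt_id t).add (h1.sqrt hr.ne')).div_const 2).sqrt (prof_pos η t hη).ne'
  refine h2.congr_deriv ?_
  have hs : 0 < √(t^2+η^2) := Real.sqrt_pos.2 hr
  have hp : 0 < prof η t := Real.sqrt_pos.2 (prof_pos η t hη)
  have e := prof_sq η t hη
  unfold prof'
  change (1 + 2*t/(2*√(t^2+η^2)))/2/(2*prof η t) = _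
  field_simp
  nlinarith

lemma prof_contDiff (η : ℝ) (hη : 0 < η) : ContDiff ℝ 1 (prof η) := by
  unfold prof
  refine ContDiff.sqrt ?_ (fun t => (prof_pos η t hη).ne')
  refine ContDiff.div_const (ContDiff.add contDiff_id (ContDiff.sqrt (by fun_prop) (fun t => ?_))) _
  positivity

lemma prof'_bound (η t : ℝ) (hη : 0 < η) : prof' η t ^ 2 ≤ 1/(4*η) := by
  obtain ⟨h1, h2, h3⟩ := prof_r η t hη
  unfold prof'
  rw [div_pow, prof_sq _ _ hη]
  have := le_abs_self t
  set r := √(t^2+η^2)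
  have hr : 0 < r := by linarith
  rw [div_le_div_iff₀ (by positivity) (by positivity)]
  have : (t+r)/2 ≤ r := by linarith
  have : (t+r)/2 * η ≤ r * r := mul_le_mul this h1 hη.le hr.le
  nlinarith

lemma prof_le (η t : ℝ) (hη : 0 < η) (h1 : η ≤ 1) (ht : |t| ≤ 1) : prof η t ^ 2 ≤ 2 := by
  obtain ⟨h1, h2, h3⟩ := prof_r η t hη
  rw [prof_sq _ _ hη]
  have := le_abs_self t
  linarith

/-- derivative of the trial function in one direction, covariantly -/
lemma trial_1d (f g : ℝ → ℝ) (w : ℝ → ℂ) (t f' g' δ α : ℝ) (w' : ℂ) (hδ : 0 < δ)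
    (hf : HasDerivAt f f' t) (hg : HasDerivAt g g' t) (hw : HasDerivAt w w' t) :
    ∃ d : ℂ, HasDerivAt (fun t => ((f t : ℝ):ℂ) * Complex.exp ((g t : ℝ) * Complex.I)
        * (w t * (((√(‖w t‖^2+δ^2))⁻¹ : ℝ) : ℂ))) d t ∧
      ‖d - (α:ℂ) * Complex.I * (((f t : ℝ):ℂ) * Complex.exp ((g t : ℝ) * Complex.I)
        * (w t * (((√(‖w t‖^2+δ^2))⁻¹ : ℝ) : ℂ)))‖^2
      ≤ 2 * f'^2 + 8 * (f t)^2 * (‖w' - ((α - g' : ℝ):ℂ) * Complex.I * w t‖^2 / (‖w t‖^2+δ^2)) := by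
  have hpos : 0 < ‖w t‖^2+δ^2 := by positivity
  have hS : 0 < √(‖w t‖^2+δ^2) := Real.sqrt_pos.2 hpos
  have hSS : √(‖w t‖^2+δ^2)^2 = ‖w t‖^2+δ^2 := Real.sq_sqrt hpos.le
  have h1 : HasDerivAt (fun t => ‖w t‖^2+δ^2) (2 * inner ℝ (w t) w') t := (hw.norm_sq).add_const _
  have h2 := ((h1.sqrt hpos.ne').inv hS.ne').ofReal_comp
  have h3 := (hf.ofReal_comp.mul (hg.ofReal_comp.mul_const Complex.I).cexp).mul (hw.mul h2)
  refine ⟨_, h3, ?_⟩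
  simp only [Pi.mul_apply, Pi.inv_apply]
  set S := √(‖w t‖^2+δ^2) with hSdef
  set D := w' - ((α - g' : ℝ):ℂ) * Complex.I * w t with hD
  have hin : inner ℝ (w t) w' = inner ℝ (w t) D := by
    have : inner ℝ (w t) (((α - g' : ℝ):ℂ) * Complex.I * w t) = 0 := by
      rw [Complex.inner]; simp; ring
    rw [hD, inner_sub_right, this, sub_zero]
  set ι := inner ℝ (w t) D with hι
  have hιb : |ι| ≤ ‖w t‖ * ‖D‖ := abs_real_inner_le_norm _ _
  have hw'D : w' = D + ((α - g' : ℝ):ℂ) * Complex.I * w t := by rw [hD]; ring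
  rw [hin]
  set E := Complex.exp ((g t : ℝ) * Complex.I) with hE
  have hEn : ‖E‖ = 1 := Complex.norm_exp_ofReal_mul_I _
  have key : ((f':ℂ) * E + (f t : ℂ) * (E * ((g':ℂ) * Complex.I))) * (w t * ((S⁻¹:ℝ):ℂ))
      + (f t : ℂ) * E * (w' * ((S⁻¹:ℝ):ℂ) + w t * ((-(2 * ι / (2 * S)) / S^2 : ℝ):ℂ))
      - (α:ℂ) * Complex.I * ((f t : ℂ) * E * (w t * ((S⁻¹:ℝ):ℂ)))
      = E * ((f' : ℂ) * (w t * ((S⁻¹:ℝ):ℂ)) + (f t : ℂ) * (D * ((S⁻¹:ℝ):ℂ) - w t * ((ι * S⁻¹ * (S^2)⁻¹ : ℝ):ℂ))) := by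
    rw [hw'D]
    have : (-(2 * ι / (2 * S)) / S^2 : ℝ) = -(ι * S⁻¹ * (S^2)⁻¹) := by field_simp
    rw [this]
    push_cast
    ring
  rw [key, norm_mul, hEn, one_mul]
  have hwS : ‖w t‖ ≤ S := Real.le_sqrt_of_sq_le (by nlinarith)
  have n1 : ‖w t * ((S⁻¹:ℝ):ℂ)‖ ≤ 1 := by
    rw [norm_mul, Complex.norm_real, Real.norm_eq_abs, abs_of_pos (inv_pos.2 hS), ← div_eq_mul_inv]
    exact (div_le_one hS).2 hwS
  have n2 : ‖D * ((S⁻¹:ℝ):ℂ)‖ = ‖D‖ / S := by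
    rw [norm_mul, Complex.norm_real, Real.norm_eq_abs, abs_of_pos (inv_pos.2 hS), ← div_eq_mul_inv]
  have n3 : ‖w t * ((ι * S⁻¹ * (S^2)⁻¹ : ℝ):ℂ)‖ ≤ ‖D‖ / S := by
    rw [norm_mul, Complex.norm_real, Real.norm_eq_abs, abs_mul, abs_mul, abs_of_pos (inv_pos.2 hS),
      abs_of_pos (inv_pos.2 (by positivity : 0 < S^2))]
    calc ‖w t‖ * (|ι| * S⁻¹ * (S^2)⁻¹) ≤ S * ((S * ‖D‖) * S⁻¹ * (S^2)⁻¹) := by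
          gcongr
          exact hιb.trans (by gcongr)
      _ = _ := by field_simp
  have n4 : ‖(f' : ℂ) * (w t * ((S⁻¹:ℝ):ℂ)) + (f t : ℂ) * (D * ((S⁻¹:ℝ):ℂ) - w t * ((ι * S⁻¹ * (S^2)⁻¹ : ℝ):ℂ))‖
      ≤ |f'| + |f t| * (2 * (‖D‖ / S)) := by
    refine (norm_add_le _ _).trans ?_
    rw [norm_mul (f':ℂ), norm_mul (f t:ℂ), Complex.norm_real f', Complex.norm_real (f t), Real.norm_eq_abs f', Real.norm_eq_abs (f t)]
    have := (norm_sub_le (D * ((S⁻¹:ℝ):ℂ)) (w t * ((ι * S⁻¹ * (S^2)⁻¹ : ℝ):ℂ)))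
    have a1 : |f'| * ‖w t * ((S⁻¹:ℝ):ℂ)‖ ≤ |f'| := mul_le_of_le_one_right (abs_nonneg _) n1
    gcongr
    linarith
  have n5 : (‖D‖/S)^2 = ‖D‖^2 / (‖w t‖^2+δ^2) := by rw [div_pow, hSS]
  rw [← n5]
  calc _ ≤ (|f'| + |f t| * (2 * (‖D‖ / S)))^2 := by gcongr
    _ ≤ 2 * |f'|^2 + 8 * |f t|^2 * (‖D‖/S)^2 := by nlinarith [sq_nonneg (|f'| - |f t| * (2 * (‖D‖ / S)))]
    _ = _ := by rw [sq_abs, sq_abs]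
lemma norm_sq_pt (x : Pt) : ‖x‖^2 = (x 0)^2 + (x 1)^2 := by
  rw [EuclideanSpace.norm_sq_eq, Fin.sum_univ_two]; simp

lemma mem_B1 (x : Pt) : x ∈ B1 ↔ ‖x‖ < 1 := by simp [B1]

lemma B1_coord (x : Pt) (hx : x ∈ B1) : x 0 ^ 2 + x 1 ^ 2 < 1 ∧ |x 0| ≤ 1 ∧ |x 1| ≤ 1 := by
  rw [mem_B1] at hx
  have h := norm_sq_pt x
  have h1 : x 0 ^ 2 + x 1 ^ 2 < 1 := by nlinarith [norm_nonneg x]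
  refine ⟨h1, ?_, ?_⟩ <;> rw [← sq_le_one_iff_abs_le_one] <;> nlinarith [sq_nonneg (x 0), sq_nonneg (x 1)]

lemma B1_meas : MeasurableSet B1 := measurableSet_ball

lemma B1_vol : volume.real B1 = π := by
  rw [B1, measureReal_def, EuclideanSpace.volume_ball_fin_two]
  simp [Real.pi_pos.le]

instance B1_fin : IsFiniteMeasure (volume.restrict B1) := by
  refine ⟨?_⟩
  rw [Measure.restrict_apply_univ]
  exact measure_ball_lt_top

lemma cont_int {E : Type*} [NormedAddCommGroup E] (g : Pt → E) (hg : Continuous g) : IntegrableOn g B1 := by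
  refine (hg.continuousOn.integrableOn_compact (isCompact_closedBall (0:Pt) 1)).mono_set ?_
  exact Metric.ball_subset_closedBall

def toProd : Pt ≃ᵐ ℝ × ℝ := (MeasurableEquiv.toLp 2 (Fin 2 → ℝ)).symm.trans MeasurableEquiv.finTwoArrow

lemma toProd_mp : MeasurePreserving toProd := 
  (volume_preserving_finTwoArrow ℝ).comp (EuclideanSpace.volume_preserving_symm_measurableEquiv_toLp (Fin 2))

lemma box_bound (g : ℝ × ℝ → ℝ) (hg : Continuous g) (h0 : ∀ p, 0 ≤ g p) :
    ∫ x in B1, g (x 0, x 1) ≤ ∫ X in (-1:ℝ)..1, ∫ Y in (-1:ℝ)..1, g (X, Y) := by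
  set Q : Set (ℝ × ℝ) := Set.Icc (-1) 1 ×ˢ Set.Icc (-1) 1 with hQ
  have hQc : IsCompact Q := isCompact_Icc.prod isCompact_Icc
  have e1 : ∫ x in toProd ⁻¹' Q, g (toProd x) = ∫ p in Q, g p :=
    toProd_mp.setIntegral_preimage_emb toProd.measurableEmbedding _ _
  have hi : IntegrableOn (fun x : Pt => g (toProd x)) (toProd ⁻¹' Q) := by
    have := (toProd_mp.integrableOn_comp_preimage toProd.measurableEmbedding (f := g) (s := Q)).2 (hg.continuousOn.integrableOn_compact hQc)
    exact this
  have e2 : ∫ x in B1, g (x 0, x 1) ≤ ∫ x in toProd ⁻¹' Q, g (toProd x) := by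
    refine setIntegral_mono_set hi (Eventually.of_forall fun x => h0 _) (LE.le.eventuallyLE ?_)
    intro x hx
    obtain ⟨_, h1, h2⟩ := B1_coord x hx
    exact ⟨abs_le.1 h1, abs_le.1 h2⟩
  rw [e1] at e2
  refine e2.trans (le_of_eq ?_)
  rw [hQ, Measure.volume_eq_prod, setIntegral_prod _ (hg.continuousOn.integrableOn_compact hQc)]
  rw [intervalIntegral.integral_of_le (by norm_num), integral_Icc_eq_integral_Ioc]
  refine integral_congr_ae (Eventually.of_forall fun X => ?_)
  simp only
  rw [intervalIntegral.integral_of_le (by norm_num), integral_Icc_eq_integral_Ioc]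

/-- the TF density -/
def tfp (k R : ℝ) (x : Pt) : ℝ := k * max 0 (‖x‖^2 - R^2)

lemma tfp_cont (k R : ℝ) : Continuous (tfp k R) := by unfold tfp; fun_prop

lemma tfp_mass (k R : ℝ) (hR : 0 ≤ R) (hR1 : R ≤ 1) : ∫ x in B1, tfp k R x = k * (π/2*(1-R^2)^2) := by
  have e0 : ∫ x in B1, tfp k R x = ∫ x : Pt, (fun r : ℝ => if r < 1 then k * max 0 (r^2-R^2) else 0) ‖x‖ := by
    rw [← integral_indicator B1_meas]
    refine integral_congr_ae (Eventually.of_forall fun x => ?_)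
    by_cases hx : x ∈ B1
    · rw [Set.indicator_of_mem hx]; simp [(mem_B1 x).1 hx, tfp]
    · rw [Set.indicator_of_notMem hx]
      rw [mem_B1] at hx; simp [hx]
  rw [e0, integral_fun_norm_addHaar volume (fun r : ℝ => if r < 1 then k * max 0 (r^2-R^2) else 0)]
  have : volume.real (Metric.ball (0:Pt) 1) = π := B1_vol
  rw [this]
  have e1 : ∫ y in Set.Ioi (0:ℝ), y^(Module.finrank ℝ Pt - 1) • (if y < 1 then k * max 0 (y^2-R^2) else 0)
      = ∫ y in R..1, k * (y * (y^2-R^2)) := by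
    rw [intervalIntegral.integral_of_le hR1, ← integral_indicator measurableSet_Ioi, ← integral_indicator measurableSet_Ioc]
    have hne : ∀ᵐ y : ℝ, y ≠ 1 := by simp [ae_iff]
    refine integral_congr_ae ?_
    filter_upwards [hne] with y hy
    simp only [Set.indicator_apply, Set.mem_Ioi, Set.mem_Ioc, finrank_euclideanSpace, Fintype.card_fin, smul_eq_mul]
    by_cases h1 : R < y
    · have : 0 < y := by linarith
      rw [max_eq_right (by nlinarith)]
      by_cases h2 : y < 1
      · simp [h1, h2, h2.le, this]; ring
      · have : ¬ y ≤ 1 := fun h => hy (le_antisymm h (not_lt.1 h2))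
        simp [h2, this]
    · simp only [h1, false_and, if_false]
      by_cases h2 : 0 < y
      · rw [max_eq_left (by nlinarith)]; simp
      · simp [h2]
  rw [e1]
  have hd : ∀ y ∈ Set.uIcc R 1, HasDerivAt (fun y : ℝ => k * ((y^2-R^2)^2/4)) (k * (y * (y^2-R^2))) y := by
    intro y _
    refine (((((hasDerivAt_pow 2 y).sub_const (R^2)).pow 2).div_const 4).const_mul k).congr_deriv ?_
    simp; left; ring
  rw [intervalIntegral.integral_eq_sub_of_hasDerivAt hd ((by fun_prop : Continuous _).intervalIntegrable _ _)]
  simp [finrank_euclideanSpace]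
  ring

/-- magnetic gradient squared -/
def magSq (Ω : ℝ) (Ψ : Pt → ℂ) (x : Pt) : ℝ :=
  ‖pd1 Ψ x - ((-(Ω/2) * x 1 : ℝ):ℂ) * Complex.I * Ψ x‖^2 + ‖pd2 Ψ x - ((Ω/2 * x 0 : ℝ):ℂ) * Complex.I * Ψ x‖^2

lemma density_eq (ε Ω : ℝ) (Ψ : Pt → ℂ) (x : Pt) :
    gpDensity ε Ω Ψ x = magSq Ω Ψ x + (‖Ψ x‖^4/ε^2 - Ω^2/4 * ‖x‖^2 * ‖Ψ x‖^2) := by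
  rw [norm_sq_pt]
  unfold gpDensity magSq angMom
  have h4 : ‖Ψ x‖^4 = (‖Ψ x‖^2)^2 := by ring
  rw [h4]
  simp only [← Complex.normSq_eq_norm_sq, Complex.normSq_apply]
  simp
  ring

lemma sq_int (Ψ : Pt → ℂ) (h : gpAdm Ψ) : IntegrableOn (fun x => ‖x‖^2 * ‖Ψ x‖^2) B1 := by
  obtain ⟨h1, h2, h3, h4, h5, h6⟩ := h
  refine Integrable.mono h2 ?_ ?_
  · exact ((by fun_prop : Continuous (fun x : Pt => ‖x‖^2)).aestronglyMeasurable).mul h2.aestronglyMeasurable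
  · filter_upwards [ae_restrict_mem B1_meas] with x hx
    rw [norm_mul]
    have : ‖‖x‖^2‖ ≤ 1 := by
      rw [mem_B1] at hx
      rw [Real.norm_eq_abs, abs_of_nonneg (by positivity)]
      nlinarith [norm_nonneg x]
    nlinarith [norm_nonneg (‖Ψ x‖^2)]

lemma dens_int (ε Ω : ℝ) (Ψ : Pt → ℂ) (h : gpAdm Ψ) : IntegrableOn (gpDensity ε Ω Ψ) B1 := by
  obtain ⟨h1, h2, h3, h4, h5, h6⟩ := h
  exact (h3.sub (h5.const_mul Ω)).add (h4.div_const _)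

/-- TF-like integral -/
def tfI (κ : ℝ) (ρ : Pt → ℝ) : ℝ := ∫ x in B1, ((ρ x)^2 - 2*κ*(‖x‖^2 * ρ x))

lemma gp_lower (ε Ω₀ : ℝ) (hε : 0 < ε) (Ψ : Pt → ℂ) (h : gpAdm Ψ) :
    tfI (Ω₀^2/8) (fun x => ‖Ψ x‖^2) ≤ ε^2 * gpEnergy ε (Ω₀/ε) Ψ := by
  unfold tfI gpEnergy
  rw [← integral_const_mul]
  have hq := sq_int Ψ h
  have hd := dens_int ε (Ω₀/ε) Ψ h
  obtain ⟨h1, h2, h3, h4, h5, h6⟩ := h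
  refine integral_mono ?_ (hd.const_mul _) ?_
  · refine Integrable.sub ?_ (hq.const_mul _)
    refine h4.congr (Eventually.of_forall fun x => ?_)
    simp only; ring
  · intro x
    simp only
    rw [density_eq]
    have : 0 ≤ magSq (Ω₀/ε) Ψ x := by unfold magSq; positivity
    have e : ε^2 * (magSq (Ω₀/ε) Ψ x + (‖Ψ x‖^4/ε^2 - (Ω₀/ε)^2/4 * ‖x‖^2 * ‖Ψ x‖^2))
      = ε^2 * magSq (Ω₀/ε) Ψ x + ((‖Ψ x‖^2)^2 - 2*(Ω₀^2/8)*(‖x‖^2 * ‖Ψ x‖^2)) := by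
      field_simp; ring
    rw [e]
    have : 0 ≤ ε^2 * magSq (Ω₀/ε) Ψ x := by positivity
    linarith

lemma gp_upper (ε Ω₀ : ℝ) (hε : 0 < ε) (Ψ : Pt → ℂ) (h : gpAdm Ψ) :
    IntegrableOn (magSq (Ω₀/ε) Ψ) B1 ∧
    ε^2 * gpEnergy ε (Ω₀/ε) Ψ = ε^2 * (∫ x in B1, magSq (Ω₀/ε) Ψ x) + tfI (Ω₀^2/8) (fun x => ‖Ψ x‖^2) := by
  have hq := sq_int Ψ h
  have hd := dens_int ε (Ω₀/ε) Ψ h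
  obtain ⟨h1, h2, h3, h4, h5, h6⟩ := h
  have e : ∀ x, ε^2 * gpDensity ε (Ω₀/ε) Ψ x = ε^2 * magSq (Ω₀/ε) Ψ x + ((‖Ψ x‖^2)^2 - 2*(Ω₀^2/8)*(‖x‖^2 * ‖Ψ x‖^2)) := by
    intro x
    rw [density_eq]; field_simp; ring
  have ht : IntegrableOn (fun x => (‖Ψ x‖^2)^2 - 2*(Ω₀^2/8)*(‖x‖^2 * ‖Ψ x‖^2)) B1 := by
    refine Integrable.sub ?_ (hq.const_mul _)
    refine h4.congr (Eventually.of_forall fun x => ?_)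
    simp only; ring
  have hm : IntegrableOn (magSq (Ω₀/ε) Ψ) B1 := by
    refine (((hd.const_mul (ε^2)).sub ht).const_mul ((ε^2)⁻¹)).congr (Eventually.of_forall fun x => ?_)
    simp only [Pi.sub_apply]
    rw [e]; field_simp; ring
  refine ⟨hm, ?_⟩
  unfold tfI gpEnergy
  rw [← integral_const_mul, ← integral_const_mul, ← integral_add (hm.const_mul _) ht]
  exact integral_congr_ae (Eventually.of_forall e)

/-- TF coercivity -/
lemma tf_coercive (k R : ℝ) (hk : 0 ≤ k) (ρ : Pt → ℝ) (h0 : ∀ x, 0 ≤ ρ x)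
    (hi : IntegrableOn ρ B1) (hi2 : IntegrableOn (fun x => ρ x^2) B1)
    (hxi : IntegrableOn (fun x => ‖x‖^2 * ρ x) B1)
    (hm : ∫ x in B1, ρ x = ∫ x in B1, tfp k R x) (hR1 : R ≤ 1) :
    ∫ x in Metric.ball (0:Pt) R, ρ x^2 ≤ tfI k ρ - tfI k (tfp k R) := by
  have c := tfp_cont k R
  have i1 : IntegrableOn (tfp k R) B1 := cont_int _ c
  have i2 : IntegrableOn (fun x => (tfp k R x)^2 - 2*k*(‖x‖^2 * tfp k R x)) B1 := cont_int _ (by fun_prop)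
  have i3 : IntegrableOn (fun x => ρ x^2 - 2*k*(‖x‖^2 * ρ x)) B1 := hi2.sub (hxi.const_mul _)
  have i4 : IntegrableOn (fun x => ρ x - tfp k R x) B1 := hi.sub i1
  have z : ∫ x in B1, (ρ x - tfp k R x) = 0 := by rw [integral_sub hi i1, hm, sub_self]
  set H := Metric.ball (0:Pt) R
  have hH : MeasurableSet H := measurableSet_ball
  have hsub : H ⊆ B1 := Metric.ball_subset_ball hR1
  have e1 : ∫ x in H, ρ x^2 = ∫ x in B1, H.indicator (fun x => ρ x^2) x := by
    rw [setIntegral_indicator hH, Set.inter_eq_right.2 hsub]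
  have iH : IntegrableOn (H.indicator (fun x => ρ x^2)) B1 := hi2.indicator hH
  rw [e1]
  unfold tfI
  rw [← integral_sub i3 i2]
  have : ∫ x in B1, H.indicator (fun x => ρ x^2) x ≤ ∫ x in B1, (((ρ x^2 - 2*k*(‖x‖^2 * ρ x)) - ((tfp k R x)^2 - 2*k*(‖x‖^2 * tfp k R x))) + 2*k*R^2*(ρ x - tfp k R x)) := by
    refine integral_mono iH ((i3.sub i2).add (i4.const_mul _)) ?_
    intro x
    have key : ((ρ x^2 - 2*k*(‖x‖^2 * ρ x)) - ((tfp k R x)^2 - 2*k*(‖x‖^2 * tfp k R x))) + 2*k*R^2*(ρ x - tfp k R x)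
        = (ρ x - tfp k R x)^2 + 2 * (ρ x - tfp k R x) * (tfp k R x - k*(‖x‖^2 - R^2)) := by ring
    simp only
    rw [key]
    rcases le_total 0 (‖x‖^2 - R^2) with h | h
    · have hx : x ∉ H := by
        simp only [H, Metric.mem_ball, dist_zero_right]
        intro h'
        nlinarith [norm_nonneg x]
      have : tfp k R x = k*(‖x‖^2 - R^2) := by simp [tfp, max_eq_right h]
      rw [Set.indicator_of_notMem hx, this, sub_self, mul_zero, add_zero]
      positivity
    · have : tfp k R x = 0 := by simp [tfp, max_eq_left h]
      rw [this]
      have p : 0 ≤ 2 * ρ x * (k * (R^2 - ‖x‖^2)) := mul_nonneg (mul_nonneg zero_le_two (h0 x)) (mul_nonneg hk (by linarith))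
      have : H.indicator (fun x => ρ x^2) x ≤ ρ x^2 := Set.indicator_le_self' (fun _ _ => sq_nonneg _) x
      linarith
  have e3 := integral_add (i3.sub i2) (i4.const_mul (2*k*R^2))
  simp only [Pi.sub_apply] at e3
  rw [e3, integral_const_mul, z] at this
  simpa using this

/-- trial function in coordinates -/
def trialG (c k η R δ Ω a q : ℝ) (N : ℕ) (X Y : ℝ) : ℂ :=
  ((c * (√k * prof η (X^2+Y^2-R^2)) : ℝ) : ℂ) * Complex.exp ((-(Ω/2)*X*Y : ℝ) * Complex.I)
    * (W N a q X Y * (((√(‖W N a q X Y‖^2+δ^2))⁻¹ : ℝ) : ℂ))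

def trial (c k η R δ Ω a q : ℝ) (N : ℕ) (x : Pt) : ℂ := trialG c k η R δ Ω a q N (x 0) (x 1)

lemma trialG_contDiff (c k η R δ Ω a q : ℝ) (N : ℕ) (hη : 0 < η) (hδ : 0 < δ) :
    ContDiff ℝ 1 (fun p : ℝ × ℝ => trialG c k η R δ Ω a q N p.1 p.2) := by
  unfold trialG
  have hW := W_contDiff N a q
  refine ContDiff.mul (ContDiff.mul ?_ ?_) (ContDiff.mul hW ?_)
  · refine Complex.ofRealCLM.contDiff.comp (f := fun p : ℝ × ℝ => c * (√k * prof η (p.1^2+p.2^2-R^2))) ?_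
    refine contDiff_const.mul (contDiff_const.mul ?_)
    exact (prof_contDiff η hη).comp (by fun_prop)
  · refine ContDiff.cexp (ContDiff.mul ?_ contDiff_const)
    refine Complex.ofRealCLM.contDiff.comp (f := fun p : ℝ × ℝ => -(Ω/2)*p.1*p.2) ?_
    fun_prop
  · refine Complex.ofRealCLM.contDiff.comp (f := fun p : ℝ × ℝ => (√(‖W N a q p.1 p.2‖^2+δ^2))⁻¹) ?_
    have hp : ∀ p : ℝ × ℝ, 0 < ‖W N a q p.1 p.2‖^2+δ^2 := fun p => by positivity
    refine ContDiff.inv (ContDiff.sqrt ((hW.norm_sq ℝ).add contDiff_const) fun p => (hp p).ne') fun p => ?_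
    exact (Real.sqrt_pos.2 (hp p)).ne'

lemma coord_contDiff : ContDiff ℝ 1 (fun x : Pt => ((x 0, x 1) : ℝ × ℝ)) := by
  fun_prop

lemma trial_contDiff (c k η R δ Ω a q : ℝ) (N : ℕ) (hη : 0 < η) (hδ : 0 < δ) :
    ContDiff ℝ 1 (trial c k η R δ Ω a q N) := by
  have h : trial c k η R δ Ω a q N = (fun p : ℝ × ℝ => trialG c k η R δ Ω a q N p.1 p.2) ∘ (fun x : Pt => ((x 0, x 1) : ℝ × ℝ)) := rfl
  rw [h]
  exact ContDiff.comp (trialG_contDiff c k η R δ Ω a q N hη hδ) coord_contDiff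

lemma pd_cont (Ψ : Pt → ℂ) (h : ContDiff ℝ 1 Ψ) : Continuous (pd1 Ψ) ∧ Continuous (pd2 Ψ) := by
  have := h.continuous_fderiv (by norm_num)
  constructor
  · unfold pd1; fun_prop
  · unfold pd2; fun_prop

lemma adm_of_contDiff (Ψ : Pt → ℂ) (h : ContDiff ℝ 1 Ψ) (h1 : ∫ x in B1, ‖Ψ x‖^2 = 1) : gpAdm Ψ := by
  obtain ⟨c1, c2⟩ := pd_cont Ψ h
  have c := h.continuous
  refine ⟨(h.differentiable (by norm_num)).differentiableOn, cont_int _ (by fun_prop), cont_int _ (by fun_prop), cont_int _ (by fun_prop), cont_int _ ?_, h1⟩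
  unfold angMom
  refine Complex.continuous_re.comp ?_
  refine (Complex.continuous_conj.comp c).mul ?_
  fun_prop

lemma pd1_eq (G : ℝ → ℝ → ℂ) (x : Pt) (d : ℂ) (hd : DifferentiableAt ℝ (fun x : Pt => G (x 0) (x 1)) x)
    (h : HasDerivAt (fun X => G X (x 1)) d (x 0)) : pd1 (fun x : Pt => G (x 0) (x 1)) x = d := by
  have h1 := hd.hasFDerivAt.hasLineDerivAt (EuclideanSpace.single 0 1)
  unfold HasLineDerivAt at h1
  have h2 : HasDerivAt (fun t => G (x 0 + t) (x 1)) d 0 := by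
    have h' : HasDerivAt (fun X => G X (x 1)) d (x 0 + 0) := by simpa using h
    exact h'.comp_const_add (x 0) 0
  refine h1.unique ?_
  have e : (fun t : ℝ => (fun x : Pt => G (x 0) (x 1)) (x + t • EuclideanSpace.single 0 1)) = fun t => G (x 0 + t) (x 1) := by
    funext t
    simp
  rw [e]
  exact h2

lemma pd2_eq (G : ℝ → ℝ → ℂ) (x : Pt) (d : ℂ) (hd : DifferentiableAt ℝ (fun x : Pt => G (x 0) (x 1)) x)
    (h : HasDerivAt (fun Y => G (x 0) Y) d (x 1)) : pd2 (fun x : Pt => G (x 0) (x 1)) x = d := by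
  have h1 := hd.hasFDerivAt.hasLineDerivAt (EuclideanSpace.single 1 1)
  unfold HasLineDerivAt at h1
  have h2 : HasDerivAt (fun t => G (x 0) (x 1 + t)) d 0 := by
    have h' : HasDerivAt (fun Y => G (x 0) Y) d (x 1 + 0) := by simpa using h
    exact h'.comp_const_add (x 1) 0
  refine h1.unique ?_
  have e : (fun t : ℝ => (fun x : Pt => G (x 0) (x 1)) (x + t • EuclideanSpace.single 1 1)) = fun t => G (x 0) (x 1 + t) := by
    funext t
    simp
  rw [e]
  exact h2

lemma kern_upper (N : ℕ) (a q X Y δ : ℝ) (hδ : 0 < δ) (h : |a*X| + 1 ≤ N) :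
    1/(‖W N a q X Y‖^2+δ^2) ≤ 100 * kern δ (2*π*a) q X Y := by
  have h1 := W_lower N a q X Y h
  have h2 := kern_den_pos δ hδ (2*π*a*X) (q*Y)
  unfold kern
  rw [← mul_div_assoc, mul_one, div_le_div_iff₀ (by positivity) h2]
  nlinarith [sq_nonneg δ]

lemma trial_mag (c k η R δ Ω a q : ℝ) (N : ℕ) (hη : 0 < η) (hη1 : η ≤ 1) (hδ : 0 < δ) (hk : 0 ≤ k)
    (ha : 0 ≤ a) (hq : 0 ≤ q) (hΩ : Ω = q * a) (hN : a + 1 ≤ N) (hR : 0 ≤ R) (hR1 : R ≤ 1)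
    (x : Pt) (hx : x ∈ B1) :
    magSq Ω (trial c k η R δ Ω a q N) x
      ≤ c^2 * k * (2/η + 1600 * (64*a^2+4*q^2) * kern δ (2*π*a) q (x 0) (x 1)) := by
  obtain ⟨hx2, hX, hY⟩ := B1_coord x hx
  set X := x 0 with hXdef
  set Y := x 1 with hYdef
  have haX : |a*X| + 1 ≤ N := by
    rw [abs_mul, abs_of_nonneg ha]
    nlinarith
  have hdiff : DifferentiableAt ℝ (trial c k η R δ Ω a q N) x :=
    (trial_contDiff c k η R δ Ω a q N hη hδ).differentiable (by norm_num) x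
  set τ := X^2+Y^2-R^2 with hτ
  have hτ1 : |τ| ≤ 1 := by
    rw [abs_le]; constructor <;> nlinarith [sq_nonneg X, sq_nonneg Y]
  have hfX : HasDerivAt (fun X => c * (√k * prof η (X^2+Y^2-R^2))) (c * (√k * (prof' η τ * (2*X)))) X := by
    have h1 : HasDerivAt (fun X : ℝ => X^2+Y^2-R^2) (2*X) X := by
      simpa using ((hasDerivAt_pow 2 X).add_const (Y^2)).sub_const (R^2)
    exact ((HasDerivAt.comp (h₂ := prof η) (h := fun X : ℝ => X^2+Y^2-R^2) X (prof_deriv η _ hη) h1).const_mul (√k)).const_mul c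
  have hfY : HasDerivAt (fun Y => c * (√k * prof η (X^2+Y^2-R^2))) (c * (√k * (prof' η τ * (2*Y)))) Y := by
    have h1 : HasDerivAt (fun Y : ℝ => X^2+Y^2-R^2) (2*Y) Y := by
      simpa using ((hasDerivAt_pow 2 Y).const_add (X^2)).sub_const (R^2)
    exact ((HasDerivAt.comp (h₂ := prof η) (h := fun Y : ℝ => X^2+Y^2-R^2) Y (prof_deriv η _ hη) h1).const_mul (√k)).const_mul c
  have hgX : HasDerivAt (fun X => -(Ω/2)*X*Y) (-(Ω/2)*Y) X := by
    simpa using ((hasDerivAt_id X).const_mul (-(Ω/2))).mul_const Y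
  have hgY : HasDerivAt (fun Y => -(Ω/2)*X*Y) (-(Ω/2)*X) Y := by
    simpa using ((hasDerivAt_id Y).const_mul (-(Ω/2)*X))
  obtain ⟨d1, hd1, b1⟩ := trial_1d _ _ _ X _ _ δ (-(Ω/2)*Y) _ hδ hfX hgX (W_dx N a q X Y)
  obtain ⟨d2, hd2, b2⟩ := trial_1d _ _ _ Y _ _ δ (Ω/2*X) _ hδ hfY hgY (W_dy N a q X Y)
  have p1 : pd1 (trial c k η R δ Ω a q N) x = d1 := pd1_eq (trialG c k η R δ Ω a q N) x d1 hdiff hd1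
  have p2 : pd2 (trial c k η R δ Ω a q N) x = d2 := pd2_eq (trialG c k η R δ Ω a q N) x d2 hdiff hd2
  unfold magSq
  rw [p1, p2]
  have kk : √k^2 = k := Real.sq_sqrt hk
  have u1 := Wx_bound N a q X Y ha haX
  have u2 := DWy_bound N a q X Y hq haX
  have s1 : -(Ω/2)*Y - -(Ω/2)*Y = 0 := by ring
  have s2 : Ω/2*X - -(Ω/2)*X = q*(a*X) := by rw [hΩ]; ring
  rw [s1] at b1
  rw [s2] at b2
  simp only [Complex.ofReal_zero, zero_mul, sub_zero] at b1
  have ku := kern_upper N a q X Y δ hδ haX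
  have pf := prof_le η τ hη hη1 hτ1
  have pd := prof'_bound η τ hη
  set κ := kern δ (2*π*a) q X Y
  set V := ‖W N a q X Y‖^2+δ^2 with hV
  have hVpos : 0 < V := by positivity
  have v1 : ‖Wx N a q X Y‖^2/V ≤ 64*a^2*(100*κ) := by
    rw [div_eq_mul_one_div]
    have : ‖Wx N a q X Y‖^2 ≤ 64*a^2 := by
      calc _ ≤ (8*a)^2 := by gcongr
        _ = _ := by ring
    gcongr
  have v2 : ‖Wy N a q X Y - ((q*(a*X):ℝ):ℂ) * Complex.I * W N a q X Y‖^2/V ≤ 4*q^2*(100*κ) := by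
    rw [div_eq_mul_one_div]
    have : ‖Wy N a q X Y - ((q*(a*X):ℝ):ℂ) * Complex.I * W N a q X Y‖^2 ≤ 4*q^2 := by
      calc _ ≤ (2*q)^2 := by gcongr
        _ = _ := by ring
    gcongr
  have f2 : (c * (√k * prof η τ))^2 ≤ 2 * (c^2*k) := by
    calc _ = c^2*(√k^2)*prof η τ^2 := by ring
      _ = c^2*k*prof η τ^2 := by rw [kk]
      _ ≤ c^2*k*2 := by gcongr
      _ = _ := by ring
  have fd : (c * (√k * (prof' η τ * (2*X))))^2 + (c * (√k * (prof' η τ * (2*Y))))^2 ≤ c^2*k*(1/η) := by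
    calc _ = c^2*(√k^2)*(prof' η τ^2*(4*(X^2+Y^2))) := by ring
      _ = c^2*k*(prof' η τ^2*(4*(X^2+Y^2))) := by rw [kk]
      _ ≤ c^2*k*((1/(4*η))*(4*1)) := by gcongr
      _ = _ := by field_simp
  have w1 : 8 * (c * (√k * prof η τ))^2 * (‖Wx N a q X Y‖^2/V) ≤ 8*(2 * (c^2*k))*(64*a^2*(100*κ)) := by gcongr
  have w2 : 8 * (c * (√k * prof η τ))^2 * (‖Wy N a q X Y - ((q*(a*X):ℝ):ℂ) * Complex.I * W N a q X Y‖^2/V) ≤ 8*(2 * (c^2*k))*(4*q^2*(100*κ)) := by gcongr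
  have fin := add_le_add b1 b2
  refine le_trans fin ?_
  have e : c^2*k*(2/η + 1600*(64*a^2+4*q^2)*κ) = 2*(c^2*k*(1/η)) + 8*(2 * (c^2*k))*(64*a^2*(100*κ)) + 8*(2 * (c^2*k))*(4*q^2*(100*κ)) := by ring
  rw [e]
  linarith

def rho0 (k η R δ a q : ℝ) (N : ℕ) (x : Pt) : ℝ :=
  k * prof η (x 0^2 + x 1^2 - R^2)^2 * (‖W N a q (x 0) (x 1)‖^2 / (‖W N a q (x 0) (x 1)‖^2+δ^2))

lemma trial_sq (c k η R δ Ω a q : ℝ) (N : ℕ) (hδ : 0 < δ) (hk : 0 ≤ k) (x : Pt) :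
    ‖trial c k η R δ Ω a q N x‖^2 = c^2 * rho0 k η R δ a q N x := by
  unfold trial trialG rho0
  have hV : 0 < ‖W N a q (x 0) (x 1)‖^2+δ^2 := by positivity
  rw [norm_mul, norm_mul, norm_mul, Complex.norm_exp_ofReal_mul_I, Complex.norm_real, Complex.norm_real, Real.norm_eq_abs, Real.norm_eq_abs]
  rw [mul_pow, mul_pow, mul_pow, sq_abs, sq_abs, inv_pow, Real.sq_sqrt hV.le, mul_pow, mul_pow, Real.sq_sqrt hk]
  ring

lemma rho0_bound (k η R δ a q : ℝ) (N : ℕ) (hη : 0 < η) (hη1 : η ≤ 1) (hδ : 0 < δ) (hk : 0 ≤ k)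
    (ha : 0 ≤ a) (hN : a + 1 ≤ N) (hR : 0 ≤ R) (hR1 : R ≤ 1) (x : Pt) (hx : x ∈ B1) :
    0 ≤ rho0 k η R δ a q N x ∧ rho0 k η R δ a q N x ≤ 2*k ∧
    |rho0 k η R δ a q N x - tfp k R x| ≤ k*η/2 + 200*k*δ^2 * kern δ (2*π*a) q (x 0) (x 1) := by
  obtain ⟨hx2, hX, hY⟩ := B1_coord x hx
  have haX : |a*x 0| + 1 ≤ N := by
    rw [abs_mul, abs_of_nonneg ha]
    nlinarith
  have ku := kern_upper N a q (x 0) (x 1) δ hδ haX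
  unfold rho0 tfp
  rw [norm_sq_pt]
  set τ := x 0^2+x 1^2-R^2 with hτ
  have hτ1 : |τ| ≤ 1 := by
    rw [abs_le]; constructor <;> nlinarith [sq_nonneg (x 0), sq_nonneg (x 1)]
  have pf := prof_le η τ hη hη1 hτ1
  have pc := prof_close η τ hη
  set V := ‖W N a q (x 0) (x 1)‖^2+δ^2 with hV
  have hVpos : 0 < V := by positivity
  have er : ‖W N a q (x 0) (x 1)‖^2 / V = 1 - δ^2 * (1/V) := by
    rw [show ‖W N a q (x 0) (x 1)‖^2 = V - δ^2 by rw [hV]; ring]; field_simp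
  have r1 : ‖W N a q (x 0) (x 1)‖^2 / V ≤ 1 := by
    rw [er]; have : 0 ≤ δ^2*(1/V) := by positivity
    linarith
  refine ⟨by positivity, ?_, ?_⟩
  · calc _ ≤ k * 2 * 1 := by gcongr
      _ = _ := by ring
  · rw [er]
    have e : k * prof η τ^2 * (1 - δ^2*(1/V)) - k * max 0 τ = k * (prof η τ^2 - max 0 τ) - k * prof η τ^2 * (δ^2*(1/V)) := by ring
    rw [e]
    refine (abs_sub _ _).trans ?_
    have a1 : |k * (prof η τ^2 - max 0 τ)| ≤ k * (η/2) := by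
      rw [abs_mul, abs_of_nonneg hk]; gcongr
    have a2 : |k * prof η τ^2 * (δ^2*(1/V))| ≤ k*2*(δ^2*(100 * kern δ (2*π*a) q (x 0) (x 1))) := by
      rw [abs_of_nonneg (by positivity)]; gcongr
    calc _ ≤ _ := add_le_add a1 a2
      _ = _ := by ring

lemma kern_B1 (δ b q : ℝ) (h0 : 0 < δ) (h1 : δ ≤ 1) (hb : 1 ≤ b) (hq : 1 ≤ q) :
    IntegrableOn (fun x : Pt => kern δ b q (x 0) (x 1)) B1 ∧
    ∫ x in B1, kern δ b q (x 0) (x 1) ≤ 72*π * log (4/δ) := by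
  have hc := kern_cont δ b q h0
  constructor
  · have e : (fun x : Pt => kern δ b q (x 0) (x 1)) = (fun p : ℝ × ℝ => kern δ b q p.1 p.2) ∘ (fun x : Pt => ((x 0, x 1) : ℝ × ℝ)) := rfl
    refine cont_int _ ?_
    rw [e]
    exact Continuous.comp hc coord_contDiff.continuous
  · exact (box_bound (fun p => kern δ b q p.1 p.2) hc (fun p => (one_div_pos.2 (kern_den_pos δ h0 _ _)).le)).trans
      (kern_int δ b q h0 h1 hb hq)

lemma rho0_cont (k η R δ a q : ℝ) (N : ℕ) (hη : 0 < η) (hδ : 0 < δ) : Continuous (rho0 k η R δ a q N) := by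
  unfold rho0
  have hW : Continuous (fun x : Pt => W N a q (x 0) (x 1)) := by
    have e : (fun x : Pt => W N a q (x 0) (x 1)) = (fun p : ℝ × ℝ => W N a q p.1 p.2) ∘ (fun x : Pt => ((x 0, x 1) : ℝ × ℝ)) := rfl
    rw [e]
    exact Continuous.comp (W_contDiff N a q).continuous coord_contDiff.continuous
  have hp : Continuous (fun x : Pt => prof η (x 0^2 + x 1^2 - R^2)) :=
    Continuous.comp (g := prof η) (f := fun x : Pt => x 0^2 + x 1^2 - R^2) (prof_contDiff η hη).continuous (by fun_prop)
  refine (continuous_const.mul (hp.pow 2)).mul ((hW.norm.pow 2).div ((hW.norm.pow 2).add continuous_const) fun x => ?_)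
  positivity

lemma log_facts (ε : ℝ) (h0 : 0 < ε) (h1 : ε ≤ 1/4) : 1 ≤ |log ε| ∧ log (4/√ε) ≤ 2 * |log ε| := by
  have hl : log ε ≤ log (1/4) := Real.log_le_log h0 h1
  have h4 : log (1/4:ℝ) = -log 4 := by rw [one_div, Real.log_inv]
  have h4' : (1:ℝ) ≤ log 4 := by
    have : log (4:ℝ) = 2 * log 2 := by
      rw [show (4:ℝ) = 2^2 by norm_num, Real.log_pow]; norm_num
    linarith [Real.log_two_gt_d9]
  have ha : |log ε| = -log ε := abs_of_nonpos (by linarith)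
  rw [ha]
  refine ⟨by linarith, ?_⟩
  rw [Real.log_div (by norm_num) (Real.sqrt_pos.2 h0).ne', Real.log_sqrt h0.le]
  linarith

lemma dens_pt (k c r t y : ℝ) (hk : 0 ≤ k) (r0 : 0 ≤ r) (r2 : r ≤ 2*k) (t0 : 0 ≤ t) (t1 : t ≤ k)
    (y0 : 0 ≤ y) (y1 : y ≤ 1) (hc : c^2 ≤ 2) :
    ((c^2 * r)^2 - 2*k*(y * (c^2 * r))) - (t^2 - 2*k*(y * t)) ≤ 7*k*|r - t| + 7*k*|c^2-1| * r := by
  have key : ((c^2 * r)^2 - 2*k*(y * (c^2 * r))) - (t^2 - 2*k*(y * t))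
      = (c^2 * r + t - 2*k*y) * (c^2 * r - t) := by ring
  rw [key]
  refine (le_abs_self _).trans ?_
  rw [abs_mul]
  have b0 : c^2 * r ≤ 2*(2*k) := mul_le_mul hc r2 r0 (by norm_num)
  have b0' : 0 ≤ c^2 * r := by positivity
  have b1 : |c^2 * r + t - 2*k*y| ≤ 7*k := by
    have h1 : 2*k*y ≤ 2*k := mul_le_of_le_one_right (by positivity) y1
    have h2 : 0 ≤ 2*k*y := by positivity
    rw [abs_le]; constructor <;> linarith
  have b2 : |c^2 * r - t| ≤ |r - t| + |c^2-1| * r := by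
    have : c^2 * r - t = (r - t) + (c^2-1) * r := by ring
    rw [this]
    refine (abs_add_le _ _).trans ?_
    rw [abs_mul (c^2-1), abs_of_nonneg r0]
  calc _ ≤ 7*k*(|r - t| + |c^2-1| * r) := mul_le_mul b1 b2 (abs_nonneg _) (by positivity)
    _ = _ := by ring

set_option maxHeartbeats 2000000 in
lemma upper_exists (Ω₀ k R : ℝ) (hΩ : 0 < Ω₀) (hk : k = Ω₀^2/8) (hR : 0 ≤ R) (hR1 : R ≤ 1)
    (hm : ∫ x in B1, tfp k R x = 1) :
    ∃ C ε₀ : ℝ, 0 < ε₀ ∧ ∀ ε : ℝ, 0 < ε → ε < ε₀ → ∃ Ψ : Pt → ℂ, gpAdm Ψ ∧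
      ε^2 * gpEnergy ε (Ω₀/ε) Ψ ≤ tfI k (tfp k R) + C * ε * |log ε| := by
  have hk0 : 0 < k := by rw [hk]; positivity
  set C1 := 28801*k*π with hC1
  set C2 := 2*k*(2*π + 1600*(64+4*Ω₀^2)*(144*π)) with hC2
  have ht : Tendsto (fun ε : ℝ => C1 * (ε * |log ε|)) (nhdsWithin 0 (Set.Ioi 0)) (nhds 0) := by
    have h1 : Tendsto (fun ε : ℝ => log ε * ε) (nhdsWithin 0 (Set.Ioi 0)) (nhds 0) := by
      simpa using tendsto_log_mul_rpow_nhdsGT_zero (zero_lt_one)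
    have h2 := (h1.abs).const_mul C1
    simp only [abs_zero, mul_zero] at h2
    refine h2.congr' ?_
    filter_upwards [self_mem_nhdsWithin] with ε hε
    rw [abs_mul, abs_of_pos (show 0 < ε from hε)]; ring
  have hev : ∀ᶠ ε in nhdsWithin (0:ℝ) (Set.Ioi 0), C1 * (ε * |log ε|) < 1/2 :=
    ht.eventually (gt_mem_nhds (by norm_num))
  obtain ⟨e1, he1, he1'⟩ := (mem_nhdsGT_iff_exists_Ioo_subset).1 hev
  refine ⟨C2 + 14*k*C1, min e1 (min (1/4) (Ω₀^2)), lt_min he1 (lt_min (by norm_num) (by positivity)), ?_⟩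
  intro ε hε hlt
  have l1 : ε < e1 := hlt.trans_le (min_le_left _ _)
  have l2 : ε < 1/4 := hlt.trans_le ((min_le_right _ _).trans (min_le_left _ _))
  have l3 : ε < Ω₀^2 := hlt.trans_le ((min_le_right _ _).trans (min_le_right _ _))
  have hsmall : C1 * (ε * |log ε|) < 1/2 := he1' ⟨hε, l1⟩
  obtain ⟨hL1, hL2⟩ := log_facts ε hε l2.le
  set L := |log ε| with hL
  set δ := √ε with hδdef
  have hδ : 0 < δ := Real.sqrt_pos.2 hε
  have hδ2 : δ^2 = ε := Real.sq_sqrt hε.le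
  have hδ1 : δ ≤ 1 := by nlinarith
  set a := 1/δ with ha
  set q := Ω₀/δ with hq
  have ha1 : 1 ≤ a := by rw [ha, le_div_iff₀ hδ]; linarith
  have hq1 : 1 ≤ q := by
    rw [hq, le_div_iff₀ hδ, one_mul]
    nlinarith
  have ha2 : a^2 = 1/ε := by rw [ha, div_pow, hδ2]; norm_num
  have hq2 : q^2 = Ω₀^2/ε := by rw [hq, div_pow, hδ2]
  have hqa : Ω₀/ε = q*a := by rw [hq, ha, ← hδ2]; field_simp
  obtain ⟨N, hN⟩ := exists_nat_ge (a+1)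
  obtain ⟨ki, kb⟩ := kern_B1 δ (2*π*a) q hδ hδ1 (by nlinarith [Real.pi_gt_three]) hq1
  have kb' : ∫ x in B1, kern δ (2*π*a) q (x 0) (x 1) ≤ 144*π*L := by
    refine kb.trans ?_
    calc _ ≤ 72*π*(2*L) := by gcongr
      _ = _ := by ring
  set J := ∫ x in B1, kern δ (2*π*a) q (x 0) (x 1) with hJ
  have hrb := rho0_bound k ε R δ a q N hε (by linarith) hδ hk0.le (by linarith) hN hR hR1
  set r := rho0 k ε R δ a q N with hr
  have rc : Continuous r := rho0_cont k ε R δ a q N hε hδ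
  have tc := tfp_cont k R
  have ri : IntegrableOn r B1 := cont_int _ rc
  have ti : IntegrableOn (tfp k R) B1 := cont_int _ tc
  have di : IntegrableOn (fun x => |r x - tfp k R x|) B1 := cont_int _ (by fun_prop)
  set d := ∫ x in B1, |r x - tfp k R x| with hd
  have hconst : ∀ c : ℝ, ∫ _ in B1, c = c * π := by
    intro c
    rw [setIntegral_const, B1_vol, smul_eq_mul, mul_comm]
  have hd1 : d ≤ C1 * (ε * L) := by
    have : d ≤ ∫ x in B1, (k*ε/2 + 200*k*δ^2 * kern δ (2*π*a) q (x 0) (x 1)) := by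
      refine setIntegral_mono_on di ((integrable_const _).add (ki.const_mul _)) B1_meas (fun x hx => (hrb x hx).2.2)
    rw [integral_add (integrable_const _) (ki.const_mul _), integral_const_mul, hconst, hδ2] at this
    refine this.trans ?_
    have h1 : 200*k*ε*J ≤ 200*k*ε*(144*π*L) := by gcongr
    have h2 : k*ε/2*π ≤ k*ε*π*L := by
      have : 0 < k*ε*π := by positivity
      nlinarith
    rw [hC1]
    linarith
  set m := ∫ x in B1, r x with hmdef
  have hmd : |m - 1| ≤ d := by
    rw [← hm, hmdef, ← integral_sub ri ti]
    exact abs_integral_le_integral_abs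
  have hm2 : 1/2 ≤ m := by
    have := (abs_le.1 hmd).1
    linarith
  have hm0 : 0 < m := by linarith
  set c := 1/√m with hc
  have hc2 : c^2 = 1/m := by rw [hc, div_pow, Real.sq_sqrt hm0.le]; norm_num
  have hc2' : c^2 ≤ 2 := by rw [hc2, div_le_iff₀ hm0]; linarith
  set Ψ := trial c k ε R δ (Ω₀/ε) a q N with hΨ
  have hsq : ∀ x, ‖Ψ x‖^2 = c^2 * r x := fun x => trial_sq c k ε R δ (Ω₀/ε) a q N hδ hk0.le x
  have hnorm : ∫ x in B1, ‖Ψ x‖^2 = 1 := by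
    simp only [hsq]
    rw [integral_const_mul, ← hmdef, hc2]; field_simp
  have hadm : gpAdm Ψ := adm_of_contDiff Ψ (trial_contDiff c k ε R δ (Ω₀/ε) a q N hε hδ) hnorm
  refine ⟨Ψ, hadm, ?_⟩
  obtain ⟨mi, me⟩ := gp_upper ε Ω₀ hε Ψ hadm
  rw [me, ← hk]
  -- kinetic part
  have hkin : ε^2 * (∫ x in B1, magSq (Ω₀/ε) Ψ x) ≤ C2 * ε * L := by
    have h1 : ∫ x in B1, magSq (Ω₀/ε) Ψ x ≤ ∫ x in B1, (c^2*k*(2/ε) + c^2*k*(1600*(64*a^2+4*q^2)) * kern δ (2*π*a) q (x 0) (x 1)) := by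
      refine setIntegral_mono_on mi ((integrable_const _).add (ki.const_mul _)) B1_meas (fun x hx => ?_)
      refine (trial_mag c k ε R δ (Ω₀/ε) a q N hε (by linarith) hδ hk0.le (by linarith) (by linarith) hqa hN hR hR1 x hx).trans (le_of_eq ?_)
      ring
    rw [integral_add (integrable_const _) (ki.const_mul _), hconst, integral_const_mul, ha2, hq2] at h1
    have h2 : c^2*k*(1600*(64*(1/ε)+4*(Ω₀^2/ε)))*J ≤ 2*k*(1600*(64*(1/ε)+4*(Ω₀^2/ε)))*(144*π*L) := by
      have hJ0 : 0 ≤ J := integral_nonneg fun x => (one_div_pos.2 (kern_den_pos δ hδ _ _)).le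
      gcongr
    have h3 : c^2*k*(2/ε)*π ≤ 2*k*(2/ε)*π*L := by
      have h5 : c^2*k*(2/ε)*π ≤ 2*k*(2/ε)*π := by gcongr
      have h6 : 0 ≤ 2*k*(2/ε)*π := by positivity
      exact h5.trans (le_mul_of_one_le_right h6 hL1)
    calc ε^2 * (∫ x in B1, magSq (Ω₀/ε) Ψ x) ≤ ε^2 * (2*k*(2/ε)*π*L + 2*k*(1600*(64*(1/ε)+4*(Ω₀^2/ε)))*(144*π*L)) := by
          gcongr; linarith
      _ = C2 * ε * L := by rw [hC2]; field_simp
  -- density part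
  have hden : tfI k (fun x => ‖Ψ x‖^2) - tfI k (tfp k R) ≤ 14*k*C1*ε*L := by
    simp only [hsq]
    unfold tfI
    have i1 : IntegrableOn (fun x => (c^2 * r x)^2 - 2*k*(‖x‖^2 * (c^2 * r x))) B1 := cont_int _ (by fun_prop)
    have i2 : IntegrableOn (fun x => (tfp k R x)^2 - 2*k*(‖x‖^2 * tfp k R x)) B1 := cont_int _ (by fun_prop)
    rw [← integral_sub i1 i2]
    have h1 : ∫ x in B1, (((c^2 * r x)^2 - 2*k*(‖x‖^2 * (c^2 * r x))) - ((tfp k R x)^2 - 2*k*(‖x‖^2 * tfp k R x)))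
        ≤ ∫ x in B1, (7*k*|r x - tfp k R x| + 7*k*|c^2-1| * r x) := by
      refine setIntegral_mono_on (i1.sub i2) ((di.const_mul _).add (ri.const_mul _)) B1_meas (fun x hx => ?_)
      obtain ⟨r0, r2, _⟩ := hrb x hx
      have hx1 : ‖x‖^2 ≤ 1 := by
        rw [mem_B1] at hx; nlinarith [norm_nonneg x]
      have t0 : 0 ≤ tfp k R x := by unfold tfp; positivity
      have t1 : tfp k R x ≤ k := by
        unfold tfp
        have : max 0 (‖x‖^2-R^2) ≤ 1 := max_le zero_le_one (by nlinarith)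
        nlinarith
      exact dens_pt k c (r x) (tfp k R x) (‖x‖^2) hk0.le r0 r2 t0 t1 (by positivity) hx1 hc2'
    rw [integral_add (di.const_mul _) (ri.const_mul _), integral_const_mul, integral_const_mul, ← hd, ← hmdef] at h1
    have h2 : |c^2-1| * m = |m-1| := by
      rw [hc2, ← abs_of_pos hm0, ← abs_mul, abs_of_pos hm0, abs_sub_comm]
      congr 1; field_simp
    have h3 : 7*k*|c^2-1| * m ≤ 7*k*d := by
      rw [mul_assoc, h2]; gcongr
    have h4 : 14*k*d ≤ 14*k*(C1*(ε*L)) := by gcongr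
    linarith
  linarith

lemma tf_at_adm (k R : ℝ) (hk : 0 ≤ k) (hR1 : R ≤ 1) (hm : ∫ x in B1, tfp k R x = 1) (Ψ : Pt → ℂ) (h : gpAdm Ψ) :
    ∫ x in Metric.ball (0:Pt) R, ‖Ψ x‖^4 ≤ tfI k (fun x => ‖Ψ x‖^2) - tfI k (tfp k R) := by
  have hq := sq_int Ψ h
  obtain ⟨h1, h2, h3, h4, h5, h6⟩ := h
  have e : ∀ x, ‖Ψ x‖^4 = (‖Ψ x‖^2)^2 := fun x => by ring
  simp only [e] at h4 ⊢
  exact tf_coercive k R hk (fun x => ‖Ψ x‖^2) (fun x => by positivity) h2 h4 hq (h6.trans hm.symm) hR1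

theorem stmt10 (Ω₀ : ℝ) (h : 4 / Real.sqrt π < Ω₀) :
    ∃ (C ε₀ : ℝ), 0 < ε₀ ∧ ∀ ε : ℝ, 0 < ε → ε < ε₀ →
      ∀ Ψ : Pt → ℂ, IsGPMinimizer ε (Ω₀ / ε) Ψ →
        (∫ x in Metric.ball (0 : Pt) (R0 Ω₀), ‖Ψ x‖ ^ 4) ≤ C * ε * |Real.log ε| := by
  have hp : 0 < √π := Real.sqrt_pos.2 Real.pi_pos
  have hpp : √π^2 = π := Real.sq_sqrt Real.pi_pos.le
  have hΩ : 0 < Ω₀ := lt_trans (by positivity) h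
  have h1 : 4 / (√π * Ω₀) < 1 := by
    rw [div_lt_one (by positivity)]
    rw [div_lt_iff₀ hp] at h
    linarith
  set R := R0 Ω₀ with hRdef
  have hR2 : R^2 = 1 - 4/(√π*Ω₀) := Real.sq_sqrt (by linarith)
  have hR : 0 ≤ R := Real.sqrt_nonneg _
  have hR1 : R ≤ 1 := by
    have : 0 < 4/(√π*Ω₀) := by positivity
    nlinarith
  set k := Ω₀^2/8 with hk
  have hk0 : 0 ≤ k := by positivity
  have hm : ∫ x in B1, tfp k R x = 1 := by
    rw [tfp_mass k R hR hR1, hR2, hk]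
    have : 1 - (1 - 4/(√π*Ω₀)) = 4/(√π*Ω₀) := by ring
    rw [this, div_pow, mul_pow, hpp]
    field_simp; norm_num
  obtain ⟨C, ε₀, hε₀, H⟩ := upper_exists Ω₀ k R hΩ hk hR hR1 hm
  refine ⟨C, ε₀, hε₀, ?_⟩
  intro ε hε hlt Ψ hΨ
  obtain ⟨Φ, hΦ, hE⟩ := H ε hε hlt
  obtain ⟨hadm, hmin⟩ := hΨ
  have hbdd : BddBelow {E | ∃ Ψ : Pt → ℂ, gpAdm Ψ ∧ E = gpEnergy ε (Ω₀/ε) Ψ} := by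
    refine ⟨tfI k (tfp k R) / ε^2, ?_⟩
    rintro E ⟨Ψ', h', rfl⟩
    rw [div_le_iff₀ (by positivity)]
    have a1 := gp_lower ε Ω₀ hε Ψ' h'
    have a2 := tf_at_adm k R hk0 hR1 hm Ψ' h'
    have a3 : 0 ≤ ∫ x in Metric.ball (0:Pt) R, ‖Ψ' x‖^4 := integral_nonneg fun x => by positivity
    linarith
  have hle : gpEnergy ε (Ω₀/ε) Ψ ≤ gpEnergy ε (Ω₀/ε) Φ := by
    rw [hmin]
    exact csInf_le hbdd ⟨Φ, hΦ, rfl⟩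
  have b1 := gp_lower ε Ω₀ hε Ψ hadm
  have b2 := tf_at_adm k R hk0 hR1 hm Ψ hadm
  have b3 : ε^2 * gpEnergy ε (Ω₀/ε) Ψ ≤ ε^2 * gpEnergy ε (Ω₀/ε) Φ := by gcongr
  linarith
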